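/- arXiv:2405.07080 — 2 statements merged into one kernel-verified Lean document; each statement's English description precedes it below -/
import Mathlib

section
/- Let p be a prime, n ≥ 2, and let q : 𝓗(pⁿ) → 𝓗(pⁿ⁻¹) be componentwise reduction modulo pⁿ⁻¹. Let H be a subgroup of 𝓗(pⁿ) and write Z = Z(𝓗(pⁿ)). (1) If the quotient HZ/Z is nontrivial and cyclic, then |C(H)| = p² · |C(q(H))|. (2) If H ≤ Z, then |C(H)| = p³ · |C(q(H))|. Here C(H) is the centralizer of H in 𝓗(pⁿ) and C(q(H)) is the centralizer of q(H) in 𝓗(pⁿ⁻¹). -/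
theorem pc_mem_ker_iff {G K : Type*} [Group G] [Group K] (q : G →* K) (s g : G) :
    s⁻¹ * g⁻¹ * s * g ∈ q.ker ↔ Commute (q s) (q g) := by
  rw [MonoidHom.mem_ker]
  simp only [map_mul, map_inv]
  rw [mul_assoc, ← mul_inv_rev, inv_mul_eq_one, commute_iff_eq]
  exact eq_comm

/-- The `q`-pseudocentralizer of a subset `S` of `G`:
all `g` such that `[s, g] = s⁻¹ * g⁻¹ * s * g ∈ ker q` for all `s ∈ S`. -/
def pseudocentralizer {G K : Type*} [Group G] [Group K] (q : G →* K) (S : Set G) :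
    Subgroup G where
  carrier := {g : G | ∀ s ∈ S, s⁻¹ * g⁻¹ * s * g ∈ q.ker}
  one_mem' := fun s _ => by
    rw [pc_mem_ker_iff, map_one]
    exact Commute.one_right _
  mul_mem' := fun {a b} ha hb s hs => by
    rw [pc_mem_ker_iff, map_mul]
    exact ((pc_mem_ker_iff q s a).mp (ha s hs)).mul_right ((pc_mem_ker_iff q s b).mp (hb s hs))
  inv_mem' := fun {a} ha s hs => by
    rw [pc_mem_ker_iff, map_inv]
    exact ((pc_mem_ker_iff q s a).mp (ha s hs)).inv_right

theorem mem_pseudocentralizer_iff {G K : Type*} [Group G] [Group K] {q : G →* K} {S : Set G}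
    {g : G} : g ∈ pseudocentralizer q S ↔ ∀ s ∈ S, s⁻¹ * g⁻¹ * s * g ∈ q.ker := Iff.rfl

/-- The mod `r` Heisenberg group, as triples `(x, y, z)` over `ZMod r`. -/
@[ext]
structure Heis (r : ℕ) where
  x : ZMod r
  y : ZMod r
  z : ZMod r

namespace Heis

variable {r : ℕ}

private def hmul (a b : Heis r) : Heis r := ⟨a.x + b.x, a.y + b.y + a.x * b.z, a.z + b.z⟩
private def hone : Heis r := ⟨0, 0, 0⟩
private def hinv (a : Heis r) : Heis r := ⟨-a.x, a.x * a.z - a.y, -a.z⟩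

instance : Group (Heis r) where
  mul := hmul
  one := hone
  inv := hinv
  mul_assoc a b c := by
    show hmul (hmul a b) c = hmul a (hmul b c)
    ext <;> (dsimp [hmul]; ring)
  one_mul a := by
    show hmul hone a = a
    ext <;> (dsimp [hmul, hone]; ring)
  mul_one a := by
    show hmul a hone = a
    ext <;> (dsimp [hmul, hone]; ring)
  inv_mul_cancel a := by
    show hmul (hinv a) a = hone
    ext <;> (dsimp [hmul, hinv, hone]; ring)

@[simp] theorem mul_x (a b : Heis r) : (a * b).x = a.x + b.x := rfl
@[simp] theorem mul_y (a b : Heis r) : (a * b).y = a.y + b.y + a.x * b.z := rfl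
@[simp] theorem mul_z (a b : Heis r) : (a * b).z = a.z + b.z := rfl
@[simp] theorem one_x : (1 : Heis r).x = 0 := rfl
@[simp] theorem one_y : (1 : Heis r).y = 0 := rfl
@[simp] theorem one_z : (1 : Heis r).z = 0 := rfl
@[simp] theorem inv_x (a : Heis r) : (a⁻¹).x = -a.x := rfl
@[simp] theorem inv_y (a : Heis r) : (a⁻¹).y = a.x * a.z - a.y := rfl
@[simp] theorem inv_z (a : Heis r) : (a⁻¹).z = -a.z := rfl

/-- Componentwise reduction `Heis r → Heis s` when `s ∣ r`. -/
def heisMap {r s : ℕ} (h : s ∣ r) : Heis r →* Heis s where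
  toFun a := ⟨ZMod.castHom h (ZMod s) a.x, ZMod.castHom h (ZMod s) a.y, ZMod.castHom h (ZMod s) a.z⟩
  map_one' := by
    ext <;> simp only [one_x, one_y, one_z, map_zero]
  map_mul' a b := by
    ext <;> simp only [mul_x, mul_y, mul_z, map_add, map_mul]

end Heis

/-- Componentwise reduction modulo `p ^ (n - 1)` from `Heis (p ^ n)` to `Heis (p ^ (n - 1))`. -/
def heisQ (p n : ℕ) : Heis (p ^ n) →* Heis (p ^ (n - 1)) :=
  Heis.heisMap (pow_dvd_pow p (Nat.sub_le n 1))

namespace Heis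

variable {r : ℕ}

theorem commute_iff (a b : Heis r) : a * b = b * a ↔ a.x * b.z = b.x * a.z := by
  rw [Heis.ext_iff]
  simp only [mul_x, mul_y, mul_z]
  constructor
  · rintro ⟨-, h, -⟩
    linear_combination h
  · intro h
    exact ⟨add_comm _ _, by linear_combination h, add_comm _ _⟩

theorem mem_center_iff (a : Heis r) : a ∈ Subgroup.center (Heis r) ↔ a.x = 0 ∧ a.z = 0 := by
  simp only [Subgroup.mem_center_iff, commute_iff]
  constructor
  · intro h
    have hx := h ⟨0, 0, 1⟩
    have hz := h ⟨1, 0, 0⟩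
    simp only [zero_mul, one_mul, mul_one, mul_zero] at hx hz
    exact ⟨hx.symm, hz⟩
  · rintro ⟨hx, hz⟩ g
    rw [hx, hz, mul_zero, zero_mul]

/-- The underlying triple of coordinates. -/
def equivProd (r : ℕ) : Heis r ≃ ZMod r × ZMod r × ZMod r where
  toFun a := (a.x, a.y, a.z)
  invFun t := ⟨t.1, t.2.1, t.2.2⟩
  left_inv _ := rfl
  right_inv _ := rfl

theorem natCard (r : ℕ) : Nat.card (Heis r) = r ^ 3 := by
  rw [Nat.card_congr (equivProd r), Nat.card_prod, Nat.card_prod, Nat.card_zmod]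
  ring

/-- The central coordinate of the commutator with an element of outer coordinates `a`, `c`. -/
def commHom (a c : ZMod r) : Heis r →* Multiplicative (ZMod r) where
  toFun g := Multiplicative.ofAdd (a * g.z - c * g.x)
  map_one' := by simp
  map_mul' g h := by
    rw [← ofAdd_add, mul_x, mul_z]
    congr 1
    ring

theorem mem_ker_commHom (a c : ZMod r) (g : Heis r) :
    g ∈ (commHom a c).ker ↔ a * g.z = c * g.x := by
  rw [MonoidHom.mem_ker]
  change a * g.z - c * g.x = 0 ↔ _
  exact sub_eq_zero

theorem card_range_commHom (hr : r ≠ 0) (a c : ℕ) :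
    Nat.card (commHom (a : ZMod r) (c : ZMod r)).range = r / r.gcd (a.gcd c) := by
  rw [← ZMod.addOrderOf_coe _ hr, ← Nat.card_zmultiples]
  refine Nat.card_congr (Equiv.subtypeEquiv Multiplicative.toAdd fun t => ?_)
  rw [MonoidHom.mem_range, AddSubgroup.mem_zmultiples_iff]
  constructor
  · rintro ⟨g, rfl⟩
    obtain ⟨a', ha⟩ := Nat.gcd_dvd_left a c
    obtain ⟨c', hc⟩ := Nat.gcd_dvd_right a c
    obtain ⟨u, hu⟩ := ZMod.intCast_surjective g.x
    obtain ⟨v, hv⟩ := ZMod.intCast_surjective g.z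
    refine ⟨a' * v - c' * u, ?_⟩
    change _ = (a : ZMod r) * g.z - c * g.x
    have ha' : (a : ZMod r) = a.gcd c * a' := by exact_mod_cast congrArg Nat.cast ha
    have hc' : (c : ZMod r) = a.gcd c * c' := by exact_mod_cast congrArg Nat.cast hc
    rw [zsmul_eq_mul, ← hu, ← hv]
    push_cast
    linear_combination -(v : ZMod r) * ha' + (u : ZMod r) * hc'
  · rintro ⟨k, hk⟩
    refine ⟨⟨-(k * a.gcdB c : ℤ), 0, (k * a.gcdA c : ℤ)⟩, ?_⟩
    change (a : ZMod r) * _ - c * _ = Multiplicative.toAdd t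
    have hb : ((a.gcd c : ℕ) : ZMod r) = a * (a.gcdA c : ℤ) + c * (a.gcdB c : ℤ) := by
      exact_mod_cast congrArg (Int.cast : ℤ → ZMod r) (Nat.gcd_eq_gcd_ab a c)
    rw [← hk, zsmul_eq_mul, hb]
    push_cast
    ring

theorem card_ker_commHom (hr : r ≠ 0) (a c : ℕ) :
    Nat.card (commHom (a : ZMod r) (c : ZMod r)).ker = r ^ 2 * r.gcd (a.gcd c) := by
  have h := Subgroup.card_mul_index (commHom (a : ZMod r) (c : ZMod r)).ker
  rw [Subgroup.index_ker, card_range_commHom hr, natCard] at h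
  have hdvd : r.gcd (a.gcd c) ∣ r := Nat.gcd_dvd_left _ _
  have hpos : 0 < r / r.gcd (a.gcd c) :=
    Nat.div_pos (Nat.le_of_dvd (Nat.pos_of_ne_zero hr) hdvd)
      (Nat.gcd_pos_of_pos_left _ (Nat.pos_of_ne_zero hr))
  refine Nat.eq_of_mul_eq_mul_right hpos ?_
  rw [h, mul_assoc, Nat.mul_div_cancel' hdvd]
  ring

/-- `h ∈ K` generates `K` modulo the center and has outer coordinates `a`, `c`. -/
structure GeneratesModCenter (K : Subgroup (Heis r)) (h : Heis r) (a c : ℕ) : Prop where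
  mem : h ∈ K
  x_eq : h.x = a
  z_eq : h.z = c
  exists_multiple : ∀ k ∈ K, ∃ j : ℤ, k.x = j * a ∧ k.z = j * c

theorem GeneratesModCenter.card_centralizer {K : Subgroup (Heis r)} {h : Heis r} {a c : ℕ}
    (hK : GeneratesModCenter K h a c) (hr : r ≠ 0) :
    Nat.card (Subgroup.centralizer (K : Set (Heis r))) = r ^ 2 * r.gcd (a.gcd c) := by
  rw [← card_ker_commHom hr]
  congr 2
  ext g
  rw [mem_ker_commHom, Subgroup.mem_centralizer_iff]
  simp only [commute_iff, SetLike.mem_coe]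
  constructor
  · intro hg
    have := hg h hK.mem
    rw [hK.x_eq, hK.z_eq] at this
    rw [this, mul_comm]
  · intro hg k hk
    obtain ⟨j, hx, hz⟩ := hK.exists_multiple k hk
    rw [hx, hz]
    linear_combination (j : ZMod r) * hg

theorem GeneratesModCenter.map {s : ℕ} (hs : s ∣ r) {K : Subgroup (Heis r)} {h : Heis r}
    {a c : ℕ} (hK : GeneratesModCenter K h a c) :
    GeneratesModCenter (K.map (heisMap hs)) (heisMap hs h) a c where
  mem := Subgroup.mem_map_of_mem _ hK.mem
  x_eq := by
    change ZMod.castHom hs (ZMod s) h.x = a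
    rw [hK.x_eq, map_natCast]
  z_eq := by
    change ZMod.castHom hs (ZMod s) h.z = c
    rw [hK.z_eq, map_natCast]
  exists_multiple := by
    rintro _ ⟨k, hk, rfl⟩
    obtain ⟨j, hx, hz⟩ := hK.exists_multiple k hk
    refine ⟨j, ?_, ?_⟩
    · change ZMod.castHom hs (ZMod s) k.x = _
      rw [hx, map_mul, map_intCast, map_natCast]
    · change ZMod.castHom hs (ZMod s) k.z = _
      rw [hz, map_mul, map_intCast, map_natCast]

theorem zpow_x_z (h : Heis r) (j : ℤ) : (h ^ j).x = j * h.x ∧ (h ^ j).z = j * h.z := by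
  induction j with
  | zero => simp
  | succ i ih =>
    rw [zpow_add_one, mul_x, mul_z, ih.1, ih.2]
    push_cast
    constructor <;> ring
  | pred i ih =>
    rw [zpow_sub_one, mul_x, mul_z, ih.1, ih.2, inv_x, inv_z]
    push_cast
    constructor <;> ring

theorem exists_generatesModCenter [NeZero r] (K : Subgroup (Heis r))
    [IsCyclic (K.map (QuotientGroup.mk' (Subgroup.center (Heis r))))] :
    ∃ h a c, GeneratesModCenter K h a c := by
  obtain ⟨⟨_, h, hh, rfl⟩, hgen⟩ :=
    IsCyclic.exists_generator (α := K.map (QuotientGroup.mk' (Subgroup.center (Heis r))))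
  refine ⟨h, h.x.val, h.z.val, hh, (ZMod.natCast_zmod_val _).symm,
    (ZMod.natCast_zmod_val _).symm, fun k hk => ?_⟩
  obtain ⟨j, hj⟩ := Subgroup.mem_zpowers_iff.mp (hgen ⟨_, k, hk, rfl⟩)
  have hj' : QuotientGroup.mk' (Subgroup.center (Heis r)) (h ^ j) = QuotientGroup.mk' _ k := by
    rw [map_zpow]
    exact congrArg Subtype.val hj
  rw [QuotientGroup.mk'_apply, QuotientGroup.mk'_apply, QuotientGroup.eq, mem_center_iff, mul_x,
    mul_z, inv_x, inv_z, (zpow_x_z h j).1, (zpow_x_z h j).2] at hj'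
  rw [ZMod.natCast_zmod_val, ZMod.natCast_zmod_val]
  exact ⟨j, by linear_combination hj'.1, by linear_combination hj'.2⟩

theorem generatesModCenter_one {K : Subgroup (Heis r)} (hK : K ≤ Subgroup.center (Heis r)) :
    GeneratesModCenter K 1 0 0 where
  mem := K.one_mem
  x_eq := by simp
  z_eq := by simp
  exists_multiple k hk := ⟨0, by simpa using (mem_center_iff k).mp (hK hk)⟩

theorem GeneratesModCenter.le_center {K : Subgroup (Heis r)} {h : Heis r} {a c : ℕ}
    (hK : GeneratesModCenter K h a c) (hd : r ∣ a.gcd c) : K ≤ Subgroup.center (Heis r) := by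
  intro k hk
  obtain ⟨j, hx, hz⟩ := hK.exists_multiple k hk
  have ha : (a : ZMod r) = 0 :=
    (ZMod.natCast_eq_zero_iff _ _).mpr (hd.trans (Nat.gcd_dvd_left _ _))
  have hc : (c : ZMod r) = 0 :=
    (ZMod.natCast_eq_zero_iff _ _).mpr (hd.trans (Nat.gcd_dvd_right _ _))
  rw [mem_center_iff, hx, hz, ha, hc, mul_zero]
  exact ⟨rfl, rfl⟩

end Heis

theorem Nat.Prime.gcd_pow_succ_of_not_dvd {p m d : ℕ} (hp : p.Prime) (hd : ¬ p ^ (m + 1) ∣ d) :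
    (p ^ (m + 1)).gcd d = (p ^ m).gcd d := by
  refine Nat.dvd_antisymm (Nat.dvd_gcd ?_ (Nat.gcd_dvd_right _ _))
    (Nat.gcd_dvd_gcd_of_dvd_left _ (pow_dvd_pow p m.le_succ))
  obtain ⟨k, hk, hgcd⟩ := (Nat.dvd_prime_pow hp).mp (Nat.gcd_dvd_left (p ^ (m + 1)) d)
  rw [hgcd]
  refine pow_dvd_pow p (Nat.le_of_lt_succ (lt_of_le_of_ne hk ?_))
  rintro rfl
  exact hd (hgcd ▸ Nat.gcd_dvd_right _ _)

/-- for a subgroup `H ≤ 𝓗(pⁿ)` with `Z = Z(𝓗(pⁿ))`: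
(1) if `HZ/Z` is nontrivial and cyclic then `|C(H)| = p² * |C(q(H))|`;
(2) if `H ≤ Z` then `|C(H)| = p³ * |C(q(H))|`. -/
theorem statement11 (p n : ℕ) (hp : p.Prime) (hn : 2 ≤ n) (H : Subgroup (Heis (p ^ n))) :
    ((H.map (QuotientGroup.mk' (Subgroup.center (Heis (p ^ n)))) ≠ ⊥ ∧
        IsCyclic (H.map (QuotientGroup.mk' (Subgroup.center (Heis (p ^ n)))))) →
      Nat.card (Subgroup.centralizer (H : Set (Heis (p ^ n)))) =
        p ^ 2 * Nat.card (Subgroup.centralizer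
          ((H.map (heisQ p n) : Subgroup (Heis (p ^ (n - 1)))) : Set (Heis (p ^ (n - 1)))))) ∧
    (H ≤ Subgroup.center (Heis (p ^ n)) →
      Nat.card (Subgroup.centralizer (H : Set (Heis (p ^ n)))) =
        p ^ 3 * Nat.card (Subgroup.centralizer
          ((H.map (heisQ p n) : Subgroup (Heis (p ^ (n - 1)))) : Set (Heis (p ^ (n - 1)))))) := by
  obtain ⟨m, rfl⟩ : ∃ m, n = m + 1 := ⟨n - 1, by omega⟩
  have hr : ∀ k, p ^ k ≠ 0 := fun k => pow_ne_zero k hp.ne_zero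
  have : NeZero (p ^ (m + 1)) := ⟨hr _⟩
  constructor
  · rintro ⟨hne, hcyc⟩
    obtain ⟨h, a, c, hH⟩ := Heis.exists_generatesModCenter H
    have hd : ¬ p ^ (m + 1) ∣ a.gcd c := fun hd => hne <| by
      rw [Subgroup.map_eq_bot_iff, QuotientGroup.ker_mk']
      exact hH.le_center hd
    rw [hH.card_centralizer (hr _), heisQ, (hH.map _).card_centralizer (hr _),
      hp.gcd_pow_succ_of_not_dvd hd, Nat.add_sub_cancel]
    ring
  · intro hle
    have hH := Heis.generatesModCenter_one hle
    rw [hH.card_centralizer (hr _), heisQ, (hH.map _).card_centralizer (hr _), Nat.gcd_zero_left,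
      Nat.gcd_zero_right, Nat.gcd_zero_right, Nat.add_sub_cancel]
    ring
end

section
/- Let 1 → G₁ →f G →q G₂ → 1 be a short exact sequence of finite groups. Then 𝒫𝒞𝒟(G) = q⁻¹(𝒞𝒟(G₂)); that is, a subgroup K of G satisfies m_s(K) = m_s*(G) if and only if K = q⁻¹(H) for some subgroup H of G₂ with m(H) = m*(G₂). -/
/-- The pseudocentralizer of `L` is the preimage of the centralizer of the image of `L`. -/
theorem pseudocentralizer_eq_comap_centralizer {G K : Type*} [Group G] [Group K] (q : G →* K)
    (L : Subgroup G) :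
    pseudocentralizer q (L : Set G) =
      (Subgroup.centralizer (L.map q : Set K)).comap q := by
  ext g
  simp only [mem_pseudocentralizer_iff, pc_mem_ker_iff, Subgroup.mem_comap,
    Subgroup.mem_centralizer_iff, Subgroup.coe_map, Set.forall_mem_image, commute_iff_eq]

theorem Subgroup.card_comap_of_surjective {G K : Type*} [Group G] [Group K] {q : G →* K}
    (hq : Function.Surjective q) (H : Subgroup K) :
    Nat.card (H.comap q) = Nat.card q.ker * Nat.card H := by
  have h := Subgroup.relIndex_mul_relIndex ⊥ q.ker (H.comap q) bot_le (Subgroup.ker_le_comap q H)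
  rw [Subgroup.relIndex_bot_left, Subgroup.relIndex_bot_left, Subgroup.relIndex_ker,
    Subgroup.map_comap_eq_self_of_surjective hq] at h
  exact h.symm

/-- The pseudo Chermak-Delgado measure of a full preimage. -/
theorem card_comap_mul_card_pseudocentralizer {G K : Type*} [Group G] [Group K] {q : G →* K}
    (hq : Function.Surjective q) (H : Subgroup K) :
    Nat.card (H.comap q) * Nat.card (pseudocentralizer q (H.comap q : Set G)) =
      Nat.card q.ker ^ 2 * (Nat.card H * Nat.card (Subgroup.centralizer (H : Set K))) := by
  rw [pseudocentralizer_eq_comap_centralizer, Subgroup.map_comap_eq_self_of_surjective hq,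
    Subgroup.card_comap_of_surjective hq, Subgroup.card_comap_of_surjective hq]
  ring

/-- Passing to the full preimage of the image does not change the pseudocentralizer. -/
theorem pseudocentralizer_comap_map {G K : Type*} [Group G] [Group K] (q : G →* K)
    (L : Subgroup G) :
    pseudocentralizer q ((L.map q).comap q : Set G) = pseudocentralizer q (L : Set G) := by
  rw [pseudocentralizer_eq_comap_centralizer, pseudocentralizer_eq_comap_centralizer,
    (Subgroup.gc_map_comap q).l_u_l_eq_l]

/-- for a short exact sequence `1 → G₁ → G → G₂ → 1` of finite groups,
`𝒫𝒞𝒟(G) = q⁻¹(𝒞𝒟(G₂))`: a subgroup `K ≤ G` attains the maximal pseudo Chermak-Delgado measure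
iff `K = q⁻¹(H)` for some subgroup `H ≤ G₂` attaining the maximal Chermak-Delgado measure. -/
theorem statement18 {G₁ G G₂ : Type*} [Group G₁] [Group G] [Group G₂]
    [Finite G₁] [Finite G] [Finite G₂]
    (f : G₁ →* G) (q : G →* G₂) (hf : Function.Injective f) (hq : Function.Surjective q)
    (hfq : f.range = q.ker) (K : Subgroup G) :
    (∀ L : Subgroup G,
        Nat.card L * Nat.card (pseudocentralizer q (L : Set G)) ≤
          Nat.card K * Nat.card (pseudocentralizer q (K : Set G))) ↔
      ∃ H : Subgroup G₂,
        (∀ L : Subgroup G₂,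
          Nat.card L * Nat.card (Subgroup.centralizer (L : Set G₂)) ≤
            Nat.card H * Nat.card (Subgroup.centralizer (H : Set G₂))) ∧
        K = H.comap q := by
  have hker : 0 < Nat.card q.ker ^ 2 := pow_pos Nat.card_pos 2
  constructor
  · intro hK
    have hle : Nat.card ((K.map q).comap q) ≤ Nat.card K := by
      have h := hK ((K.map q).comap q)
      rw [pseudocentralizer_comap_map] at h
      exact Nat.le_of_mul_le_mul_right h Nat.card_pos
    have hKeq : K = (K.map q).comap q :=
      Subgroup.eq_of_le_of_card_ge (Subgroup.le_comap_map q K) hle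
    refine ⟨K.map q, fun L => ?_, hKeq⟩
    have h := hK (L.comap q)
    rw [hKeq, card_comap_mul_card_pseudocentralizer hq,
      card_comap_mul_card_pseudocentralizer hq] at h
    exact Nat.le_of_mul_le_mul_left h hker
  · rintro ⟨H, hH, rfl⟩ L
    calc Nat.card L * Nat.card (pseudocentralizer q (L : Set G))
        ≤ Nat.card ((L.map q).comap q) * Nat.card (pseudocentralizer q (L : Set G)) :=
          Nat.mul_le_mul_right _ (Subgroup.card_le_of_le (Subgroup.le_comap_map q L))
      _ = Nat.card q.ker ^ 2 *
            (Nat.card (L.map q) * Nat.card (Subgroup.centralizer (L.map q : Set G₂))) := by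
          rw [← pseudocentralizer_comap_map, card_comap_mul_card_pseudocentralizer hq]
      _ ≤ Nat.card q.ker ^ 2 *
            (Nat.card H * Nat.card (Subgroup.centralizer (H : Set G₂))) :=
          Nat.mul_le_mul_left _ (hH _)
      _ = _ := (card_comap_mul_card_pseudocentralizer hq H).symm
end
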